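/- Let A be an m×m complex matrix, let v, w ∈ ℂ^m, let p ∈ ℂ, and suppose A v = p·v. Then, as multisets of complex numbers counted with multiplicity, roots(charpoly(A + v wᵀ)) + {p} = roots(charpoly(A)) + {p + wᵀv}; i.e., the eigenvalues of A + v wᵀ are exactly the eigenvalues of A with one copy of p replaced by p + wᵀv. -/

import Mathlib

open Matrix Polynomial

theorem aux_det {R : Type*} [CommRing R] [Nontrivial R] {m : ℕ} (v w : Fin m → R) (t : R) :
    t * (t • (1 : Matrix (Fin m) (Fin m) R) - Matrix.vecMulVec v w).det
      = t ^ m * (t - w ⬝ᵥ v) := by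
  have h := congrArg (Polynomial.eval t) (Matrix.charpoly_vecMulVec v w)
  rw [Matrix.eval_charpoly, Matrix.scalar_apply, ← Matrix.smul_one_eq_diagonal] at h
  rw [h]
  cases m with
  | zero => simp
  | succ k =>
    simp [dotProduct_comm v w]
    ring

theorem aux_charpoly
    {m : ℕ} (A : Matrix (Fin m) (Fin m) ℂ) (v w : Fin m → ℂ) (p : ℂ)
    (h : A.mulVec v = p • v) :
    (A + Matrix.vecMulVec v w).charpoly * (X - C p)
      = A.charpoly * (X - C (p + w ⬝ᵥ v)) := by
  set v' : Fin m → ℂ[X] := fun i => C (v i) with hv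
  set w' : Fin m → ℂ[X] := fun i => C (w i) with hw
  have hd : w' ⬝ᵥ v' = C (w ⬝ᵥ v) := by simp [dotProduct, hv, hw]
  have h1 : (A + Matrix.vecMulVec v w).charmatrix = A.charmatrix - Matrix.vecMulVec v' w' := by
    ext1 i j
    simp [Matrix.charmatrix, Matrix.vecMulVec_apply, hv, hw]
    ring
  have h2 : A.charmatrix.mulVec v' = (X - C p : ℂ[X]) • v' := by
    have h3 : (A.map C).mulVec v' = C p • v' := by
      ext1 i
      have := congrArg C (congrFun h i)
      simpa [Matrix.mulVec, dotProduct, hv] using this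
    rw [Matrix.charmatrix, Matrix.sub_mulVec, sub_smul]
    congr 1
    ext1 i
    simp
  have h4 : (X - C p : ℂ[X]) • (A.charmatrix - Matrix.vecMulVec v' w')
      = A.charmatrix * ((X - C p : ℂ[X]) • (1 : Matrix (Fin m) (Fin m) ℂ[X])
          - Matrix.vecMulVec v' w') := by
    rw [Matrix.mul_sub, Matrix.mul_vecMulVec, h2, smul_sub, Matrix.smul_vecMulVec]
    simp
  have h5 := congrArg Matrix.det h4
  rw [Matrix.det_smul, Matrix.det_mul, ← h1, Fintype.card_fin] at h5
  have h6 := aux_det v' w' (X - C p)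
  rw [hd] at h6
  have hne : (X - C p : ℂ[X]) ^ m ≠ 0 := pow_ne_zero _ (X_sub_C_ne_zero p)
  apply mul_left_cancel₀ hne
  rw [Matrix.charpoly, Matrix.charpoly, C_add]
  linear_combination (X - C p) * h5 + A.charmatrix.det * h6

theorem eigenvalues_rank_one_update_along_eigenvector
    {m : ℕ} (A : Matrix (Fin m) (Fin m) ℂ) (v w : Fin m → ℂ) (p : ℂ)
    (h : A.mulVec v = p • v) :
    (A + Matrix.vecMulVec v w).charpoly.roots + {p}
      = A.charpoly.roots + {p + w ⬝ᵥ v} := by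
  have := congrArg Polynomial.roots (aux_charpoly A v w p h)
  rwa [roots_mul (mul_ne_zero (Matrix.charpoly_monic _).ne_zero (X_sub_C_ne_zero _)),
    roots_mul (mul_ne_zero (Matrix.charpoly_monic _).ne_zero (X_sub_C_ne_zero _)),
    roots_X_sub_C, roots_X_sub_C] at this
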